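/- Let σ₁,…,σₙ be positive integers with anisotropic dilations δ_λ on ℝⁿ, let X be a smooth vector field on ℝⁿ with coefficients p₁,…,pₙ, and let ν be a positive integer. Suppose X is δ_λ-homogeneous of degree ν, i.e. for every smooth u : ℝⁿ → ℝ, every λ > 0 and every x ∈ ℝⁿ: X(u ∘ δ_λ)(x) = λ^ν (Xu)(δ_λ(x)). Then for every j = 1,…,n, p_j(δ_λ(x)) = λ^{σ_j − ν} p_j(x) for all λ > 0 and x ∈ ℝⁿ; consequently each p_j is a polynomial function, and p_j ≡ 0 whenever ν > σ_j. -/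

import Mathlib

theorem aux_fderiv {n : ℕ} (c : Fin n → ℝ) (u : (Fin n → ℝ) → ℝ) (hu : Differentiable ℝ u)
    (x : Fin n → ℝ) (j : Fin n) :
    fderiv ℝ (fun y => u (fun i => c i * y i)) x (Pi.single j 1)
      = c j * fderiv ℝ u (fun i => c i * x i) (Pi.single j 1) := by
  have hD : HasFDerivAt (fun y : Fin n → ℝ => (fun i => c i * y i))
      (ContinuousLinearMap.pi fun i => c i • ContinuousLinearMap.proj (R := ℝ) (φ := fun _ : Fin n => ℝ) i) x := by
    rw [hasFDerivAt_pi]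
    intro i
    exact (hasFDerivAt_apply i x).const_mul (c i)
  have h := (hu (fun i => c i * x i)).hasFDerivAt.comp x hD
  have h2 : fderiv ℝ (fun y => u (fun i => c i * y i)) x = _ := h.fderiv
  rw [h2, ContinuousLinearMap.comp_apply, ← smul_eq_mul, ← map_smul]
  congr 1
  ext i
  by_cases hij : i = j
  · subst hij; simp
  · simp [hij]

theorem aux_neg {n : ℕ} (σ : Fin n → ℕ) (hσ : ∀ i, 0 < σ i) (f : (Fin n → ℝ) → ℝ)
    (hf : Continuous f) (k : ℕ)
    (h : ∀ lam : ℝ, 0 < lam → ∀ x : Fin n → ℝ, f x = lam ^ k * f (fun i => lam ^ (σ i) * x i))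
    (x : Fin n → ℝ) : f x = 0 ^ k * f 0 := by
  have hc : Continuous (fun lam : ℝ => lam ^ k * f (fun i => lam ^ (σ i) * x i)) := by fun_prop
  have h1 := (hc.tendsto 0).mono_left (nhdsWithin_le_nhds (s := Set.Ioi 0))
  have h2 : Filter.Tendsto (fun lam : ℝ => lam ^ k * f (fun i => lam ^ (σ i) * x i))
      (nhdsWithin 0 (Set.Ioi 0)) (nhds (f x)) := by
    refine tendsto_const_nhds.congr' ?_
    filter_upwards [self_mem_nhdsWithin] with lam hl
    exact h lam hl x
  rw [tendsto_nhds_unique h2 h1]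
  congr 2
  ext i
  simp [(hσ i).ne']

theorem aux_euler {n : ℕ} (σ : Fin n → ℕ) (f : (Fin n → ℝ) → ℝ)
    (hf : Differentiable ℝ f) (m : ℤ)
    (h : ∀ lam : ℝ, 0 < lam → ∀ x : Fin n → ℝ, f (fun i => lam ^ (σ i) * x i) = lam ^ m * f x)
    (x : Fin n → ℝ) : (m : ℝ) * f x = ∑ i, (σ i * x i) * fderiv ℝ f x (Pi.single i 1) := by
  have hg : HasDerivAt (fun lam : ℝ => (fun i => lam ^ (σ i) * x i)) (fun i => σ i * x i) 1 := by
    rw [hasDerivAt_pi]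
    intro i
    simpa using (hasDerivAt_pow (σ i) (1 : ℝ)).mul_const (x i)
  have e : (fun i => (1 : ℝ) ^ (σ i) * x i) = x := by ext i; simp
  have h1 : HasDerivAt (fun lam : ℝ => f (fun i => lam ^ (σ i) * x i))
      (fderiv ℝ f x (fun i => σ i * x i)) 1 := by
    have hfx : HasFDerivAt f (fderiv ℝ f x) (fun i => (1 : ℝ) ^ (σ i) * x i) := by
      rw [e]; exact (hf x).hasFDerivAt
    exact hfx.comp_hasDerivAt (1 : ℝ) hg
  have h2 : HasDerivAt (fun lam : ℝ => lam ^ m * f x) (m * f x) 1 := by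
    simpa using (hasDerivAt_zpow m (1 : ℝ) (Or.inl one_ne_zero)).mul_const (f x)
  have h3 : HasDerivAt (fun lam : ℝ => f (fun i => lam ^ (σ i) * x i)) (m * f x) 1 := by
    refine h2.congr_of_eventuallyEq ?_
    filter_upwards [Ioi_mem_nhds (zero_lt_one (α := ℝ))] with lam hl
    exact h lam hl x
  rw [h3.unique h1]
  conv_lhs => rw [pi_eq_sum_univ' (fun i => (σ i : ℝ) * x i)]
  rw [map_sum]
  refine Finset.sum_congr rfl fun i _ => ?_
  rw [map_smul, smul_eq_mul]

theorem aux_zero {n : ℕ} (σ : Fin n → ℕ) (hσ : ∀ i, 0 < σ i) (f : (Fin n → ℝ) → ℝ)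
    (hf : Continuous f) (m : ℤ) (hm : m < 0)
    (h : ∀ lam : ℝ, 0 < lam → ∀ x : Fin n → ℝ, f (fun i => lam ^ (σ i) * x i) = lam ^ m * f x)
    (x : Fin n → ℝ) : f x = 0 := by
  obtain ⟨k, rfl⟩ : ∃ k : ℕ, m = -(k : ℤ) := ⟨m.natAbs, by omega⟩
  have := aux_neg σ hσ f hf k (fun lam hl x => by
    rw [h lam hl x, zpow_neg, zpow_natCast, mul_inv_cancel_left₀ (pow_pos hl k).ne']) x
  rw [this, zero_pow (by omega), zero_mul]

theorem aux_poly {n : ℕ} (σ : Fin n → ℕ) (hσ : ∀ i, 0 < σ i) (k : ℕ) :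
    ∀ (m : ℤ), m < k → ∀ f : (Fin n → ℝ) → ℝ, ContDiff ℝ (⊤ : ℕ∞) f →
    (∀ lam : ℝ, 0 < lam → ∀ x : Fin n → ℝ, f (fun i => lam ^ (σ i) * x i) = lam ^ m * f x) →
    ∃ P : MvPolynomial (Fin n) ℝ, ∀ x, f x = MvPolynomial.eval x P := by
  induction k with
  | zero =>
    intro m hm f hf h
    exact ⟨0, fun x => by simpa using aux_zero σ hσ f hf.continuous m (by simpa using hm) h x⟩
  | succ k ih =>
    intro m hm f hf h
    by_cases hm0 : m = 0
    · subst hm0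
      refine ⟨MvPolynomial.C (f 0), fun x => ?_⟩
      have := aux_neg σ hσ f hf.continuous 0 (fun lam hl x => by simpa using (h lam hl x).symm) x
      simpa using this
    have hfd : Differentiable ℝ f := hf.differentiable (by simp)
    have key : ∀ i, ∃ P : MvPolynomial (Fin n) ℝ,
        ∀ x, fderiv ℝ f x (Pi.single i 1) = MvPolynomial.eval x P := by
      intro i
      refine ih (m - σ i) (by have := hσ i; push_cast at hm; omega) _ ?_ ?_
      · exact (hf.fderiv_right (m := (⊤ : ℕ∞)) (by simp)).clm_apply contDiff_const
      · intro lam hl x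
        have h1 := aux_fderiv (fun i => lam ^ σ i) f hfd x i
        have h2 : (fun y => f (fun i => lam ^ σ i * y i)) = fun y => lam ^ m * f y := by
          ext y; exact h lam hl y
        rw [h2, fderiv_const_mul (hfd x)] at h1
        simp only [ContinuousLinearMap.smul_apply, smul_eq_mul] at h1
        rw [zpow_sub₀ hl.ne', zpow_natCast, div_mul_eq_mul_div, h1]
        field_simp
    choose P hP using key
    refine ⟨MvPolynomial.C ((m : ℝ)⁻¹) *
      ∑ i, (MvPolynomial.C (σ i : ℝ) * MvPolynomial.X i) * P i, fun x => ?_⟩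
    have hm1 : (m : ℝ) ≠ 0 := by exact_mod_cast hm0
    have he := aux_euler σ f hfd m h x
    simp only [map_mul, map_sum, MvPolynomial.eval_C, MvPolynomial.eval_X, ← hP]
    rw [← he, inv_mul_cancel_left₀ hm1]

/-- Let `X = Σ_j p_j ∂_{x_j}` be a smooth vector field on `ℝⁿ` which is
`δ_λ`-homogeneous of positive integer degree `ν`, i.e. `X(u ∘ δ_λ) = λ^ν (Xu) ∘ δ_λ` for
all smooth `u`. Then each coefficient satisfies `p_j(δ_λ(x)) = λ^(σ_j − ν) p_j(x)`; hence
each `p_j` is a polynomial function, and `p_j ≡ 0` whenever `ν > σ_j`. -/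
theorem stmt_11 (n : ℕ) (σ : Fin n → ℕ) (hσ : ∀ i, 0 < σ i)
    (p : Fin n → (Fin n → ℝ) → ℝ) (hp : ∀ j, ContDiff ℝ (⊤ : ℕ∞) (p j))
    (X : ((Fin n → ℝ) → ℝ) → (Fin n → ℝ) → ℝ)
    (hX : ∀ u x, X u x = ∑ j, p j x * fderiv ℝ u x (Pi.single j 1))
    (ν : ℕ) (hν : 0 < ν)
    (hom : ∀ u : (Fin n → ℝ) → ℝ, ContDiff ℝ (⊤ : ℕ∞) u → ∀ lam : ℝ, 0 < lam → ∀ x : Fin n → ℝ,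
      X (fun y => u (fun i => lam ^ (σ i) * y i)) x
        = lam ^ ν * X u (fun i => lam ^ (σ i) * x i)) :
    ∀ j : Fin n,
      (∀ lam : ℝ, 0 < lam → ∀ x : Fin n → ℝ,
        p j (fun i => lam ^ (σ i) * x i) = lam ^ ((σ j : ℤ) - (ν : ℤ)) * p j x) ∧
      (∃ P : MvPolynomial (Fin n) ℝ, ∀ x, p j x = MvPolynomial.eval x P) ∧
      (σ j < ν → ∀ x, p j x = 0) := by
  intro j
  have H : ∀ lam : ℝ, 0 < lam → ∀ x : Fin n → ℝ,
        p j (fun i => lam ^ (σ i) * x i) = lam ^ ((σ j : ℤ) - (ν : ℤ)) * p j x := by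
    intro lam hl x
    have hu : ContDiff ℝ (⊤ : ℕ∞) (fun y : Fin n → ℝ => y j) := contDiff_apply ℝ ℝ j
    have hud : Differentiable ℝ (fun y : Fin n → ℝ => y j) := hu.differentiable (by simp)
    have hd : ∀ (z : Fin n → ℝ) (v : Fin n → ℝ), fderiv ℝ (fun y : Fin n → ℝ => y j) z v = v j := by
      intro z v
      rw [(hasFDerivAt_apply j z).fderiv]; rfl
    have h1 := hom _ hu lam hl x
    rw [hX, hX] at h1
    have h2 : ∀ i, fderiv ℝ (fun y : Fin n → ℝ => lam ^ σ j * y j) x (Pi.single i 1) =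
        lam ^ σ i * (Pi.single i 1 : Fin n → ℝ) j := by
      intro i
      rw [aux_fderiv (fun i => lam ^ σ i) (fun y : Fin n → ℝ => y j) hud x i, hd]
    simp only [h2, hd, Pi.single_apply] at h1
    simp at h1
    rw [zpow_sub₀ hl.ne', zpow_natCast, zpow_natCast, div_mul_eq_mul_div, mul_comm (lam ^ σ j), h1]
    field_simp
  refine ⟨H, ?_, ?_⟩
  · exact aux_poly σ hσ (σ j + 1) _ (by push_cast; omega) _ (hp j) H
  · intro hlt x
    exact aux_zero σ hσ (p j) (hp j).continuous _ (by omega) H x
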